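/- For λ > 0 and all s, t, θ ∈ ℝ: j_λ(√(s² + t² − 2st cos θ)) = Σ_{n=0}^∞ ((n+λ)(2λ)_n/(λ n!)) (Γ(λ+1)/(2^n Γ(n+λ+1)))² (st)^n j_{n+λ}(s) j_{n+λ}(t) C̃_n^λ(cos θ), with uniform convergence in θ. -/

import Mathlib

open Filter

/-- The normalized Bessel function
`j_α(x) = Γ(α+1) Σ_{n≥0} (−1)^n (x/2)^{2n} / (n! Γ(n+α+1))`. -/
noncomputable def besselJR (α : ℝ) (x : ℝ) : ℝ :=
  Real.Gamma (α + 1) *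
    ∑' n : ℕ, ((-1 : ℝ)) ^ n * (x / 2) ^ (2 * n) /
      ((n.factorial : ℝ) * Real.Gamma ((n : ℝ) + α + 1))

/-- The Pochhammer symbol `(a)_n`. -/
noncomputable def poch (a : ℝ) (n : ℕ) : ℝ := (ascPochhammer ℝ n).eval a

/-- The Gegenbauer polynomial normalized by `C̃_n^λ(1) = 1`, i.e.
`C̃_n^λ(x) = ₂F₁(−n, n+2λ; λ+1/2; (1−x)/2)`. -/
noncomputable def gegenbauerN (lam : ℝ) (n : ℕ) (x : ℝ) : ℝ :=
  ∑ j ∈ Finset.range (n + 1),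
    poch (-(n : ℝ)) j * poch ((n : ℝ) + 2 * lam) j /
      (poch (lam + 1/2) j * (j.factorial : ℝ)) * ((1 - x) / 2) ^ j

/-!
Write `besselJR α x = Γ(α + 1) C_α(-x² / 4)` with the Bessel–Clifford function `C_α`, whose
derivative is `C_{α + 1}`. The argument of `C_λ` in the theorem is affine in `x = cos θ`, so
`C_λ` can be Taylor expanded at `x = 1`; likewise the derivatives of Gegenbauer polynomials at
`x = 1` are multiples of their values at `x = 1` for the parameters `λ + j`. This reduces the
expansion for `λ` to the case `x = 1` of the expansions for all `λ + j`. In that case both sides are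
power series in two variables, and comparing coefficients leaves a terminating very-well-poised
hypergeometric sum, which is evaluated by a Wilf–Zeilberger recurrence. Since
`Γ(μ) (m + μ) (2μ)_m / Γ(m + μ + 1) ≤ 2 ^ m`, all the rearranged series are dominated by products of
exponential series, uniformly for bounded `x`.
-/

open Real Finset

/-! ### Pochhammer symbols and the reciprocal Gamma function -/

@[simp] lemma poch_zero (a : ℝ) : poch a 0 = 1 := by simp [poch]

lemma poch_succ (a : ℝ) (n : ℕ) : poch a (n + 1) = poch a n * (a + n) :=
  ascPochhammer_succ_eval n a

lemma poch_pos {a : ℝ} (ha : 0 < a) (n : ℕ) : 0 < poch a n := ascPochhammer_pos n a ha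

lemma poch_ne_zero {a : ℝ} (ha : ∀ n : ℕ, a ≠ -n) (n : ℕ) : poch a n ≠ 0 := by
  induction n with
  | zero => simp
  | succ n ih =>
    rw [poch_succ]
    exact mul_ne_zero ih fun h => ha n (eq_neg_of_add_eq_zero_left h)

lemma poch_add (a : ℝ) (m n : ℕ) : poch a (m + n) = poch a m * poch (a + m) n := by
  simp [poch, ← ascPochhammer_mul, Polynomial.eval_comp]

lemma poch_two_mul (a : ℝ) (n : ℕ) :
    poch (2 * a) (2 * n) = 4 ^ n * poch a n * poch (a + 1 / 2) n := by
  induction n with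
  | zero => simp
  | succ n ih =>
    rw [show 2 * (n + 1) = 2 * n + 1 + 1 by ring]
    simp only [poch_succ, ih]
    push_cast
    ring

lemma poch_two_mul_le {a : ℝ} (ha : 0 < a) (n : ℕ) : poch (2 * a) n ≤ 2 ^ n * poch a n := by
  induction n with
  | zero => simp
  | succ n ih =>
    have hpos := poch_pos ha n
    calc poch (2 * a) (n + 1) = poch (2 * a) n * (2 * a + n) := poch_succ _ _
      _ ≤ 2 ^ n * poch a n * (2 * (a + n)) := by gcongr; linarith [n.cast_nonneg (α := ℝ)]
      _ = 2 ^ (n + 1) * poch a (n + 1) := by rw [poch_succ]; ring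

lemma poch_neg_natCast_add (m j : ℕ) :
    poch (-(m + j : ℝ)) j = (-1) ^ j * ((m + j).factorial / m.factorial) := by
  rw [poch, ascPochhammer_eval_neg_eq_descPochhammer, ← Nat.cast_add,
    descPochhammer_eval_eq_descFactorial, Nat.descFactorial_eq_div (Nat.le_add_left j m),
    Nat.add_sub_cancel, Nat.cast_div (Nat.factorial_dvd_factorial (Nat.le_add_right m j))
      (by positivity)]

lemma ne_neg_natCast_of_pos {x : ℝ} (hx : 0 < x) (n : ℕ) : x ≠ -n := by
  have := n.cast_nonneg (α := ℝ)
  linarith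

lemma Gamma_natCast_add {a : ℝ} (ha : ∀ n : ℕ, a ≠ -n) (n : ℕ) :
    Gamma (n + a) = poch a n * Gamma a := by
  induction n with
  | zero => simp
  | succ n ih =>
    have hne : (n : ℝ) + a ≠ 0 := fun h => ha n (eq_neg_of_add_eq_zero_right h)
    rw [show ((n + 1 : ℕ) : ℝ) + a = n + a + 1 by push_cast; ring, Gamma_add_one hne, ih, poch_succ]
    ring

/-- The entire function `1 / Γ`. Its zeros at `0, -1, -2, …` are genuine: there Mathlib's `Γ` is
`0`, and so is the inverse. -/
noncomputable def invGamma (x : ℝ) : ℝ := (Gamma x)⁻¹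

lemma invGamma_eq_mul_invGamma_add_one (x : ℝ) : invGamma x = x * invGamma (x + 1) := by
  rcases eq_or_ne x 0 with rfl | hx
  · simp [invGamma]
  · rw [invGamma, invGamma, Gamma_add_one hx, mul_inv, mul_inv_cancel_left₀ hx]

lemma invGamma_natCast_add_one (n : ℕ) : invGamma (n + 1) = (n.factorial : ℝ)⁻¹ := by
  rw [invGamma, Gamma_nat_eq_factorial]

lemma invGamma_neg_natCast (n : ℕ) : invGamma (-n) = 0 := by
  rw [invGamma, Gamma_neg_nat_eq_zero, inv_zero]

lemma invGamma_pos {x : ℝ} (hx : 0 < x) : 0 < invGamma x := inv_pos.mpr (Gamma_pos_of_pos hx)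

lemma invGamma_natCast_add_add_one_le {α : ℝ} (hα : 0 ≤ α) (n : ℕ) :
    invGamma (n + α + 1) ≤ invGamma (α + 1) := by
  induction n with
  | zero => simp
  | succ n ih =>
    have hpos : 0 < invGamma (n + α + 1 + 1) := invGamma_pos (by positivity)
    calc invGamma ((n + 1 : ℕ) + α + 1) = invGamma (n + α + 1 + 1) := by congr 1; push_cast; ring
      _ ≤ (n + α + 1) * invGamma (n + α + 1 + 1) :=
        le_mul_of_one_le_left hpos.le (by linarith [n.cast_nonneg (α := ℝ)])
      _ = invGamma (n + α + 1) := (invGamma_eq_mul_invGamma_add_one _).symm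
      _ ≤ invGamma (α + 1) := ih

/-! ### Gegenbauer coefficients -/

/-- The coefficient `Γ(μ) (m + μ) (2μ)_m / m!` carried by the `m`-th term of Gegenbauer's addition
theorem, in the scaling where the Bessel functions are replaced by `besselClifford`. -/
noncomputable def gegenbauerCoeff (μ : ℝ) (m : ℕ) : ℝ :=
  Gamma μ * (m + μ) * (poch (2 * μ) m / m.factorial)

lemma gegenbauerCoeff_pos {μ : ℝ} (hμ : 0 < μ) (m : ℕ) : 0 < gegenbauerCoeff μ m := by
  have hpoch := poch_pos (a := 2 * μ) (by positivity) m
  unfold gegenbauerCoeff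
  positivity

lemma gegenbauerCoeff_mul_invGamma {μ : ℝ} (hμ : ∀ n : ℕ, μ ≠ -n) (m : ℕ) :
    gegenbauerCoeff μ m * invGamma (m + μ + 1) = poch (2 * μ) m / poch μ m / m.factorial := by
  have hsum : (m : ℝ) + μ ≠ 0 := fun h => hμ m (eq_neg_of_add_eq_zero_right h)
  have hGamma := Gamma_ne_zero hμ
  have hpoch := poch_ne_zero hμ m
  rw [gegenbauerCoeff, invGamma, Gamma_add_one hsum, Gamma_natCast_add hμ]
  field_simp

lemma gegenbauerCoeff_mul_invGamma_le {μ : ℝ} (hμ : 0 < μ) (m : ℕ) :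
    gegenbauerCoeff μ m * invGamma (m + μ + 1) ≤ 2 ^ m / m.factorial := by
  rw [gegenbauerCoeff_mul_invGamma (ne_neg_natCast_of_pos hμ)]
  gcongr
  rw [div_le_iff₀ (poch_pos hμ m)]
  exact poch_two_mul_le hμ m

lemma abs_gegenbauerCoeff_mul_le {μ : ℝ} (hμ : 0 < μ) (m : ℕ) (v : ℝ) {x y A B : ℝ}
    (hx : |x| ≤ A * invGamma (m + μ + 1)) (hy : |y| ≤ B * invGamma (m + μ + 1)) :
    |gegenbauerCoeff μ m * v ^ m * (x * y)| ≤
      |2 * v| ^ m / m.factorial * (A * B * invGamma (μ + 1)) := by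
  have hg : 0 < invGamma (m + μ + 1) := invGamma_pos (by positivity)
  have hA : 0 ≤ A := nonneg_of_mul_nonneg_left ((abs_nonneg x).trans hx) hg
  have hB : 0 ≤ B := nonneg_of_mul_nonneg_left ((abs_nonneg y).trans hy) hg
  have hcoeff := gegenbauerCoeff_pos hμ m
  calc |gegenbauerCoeff μ m * v ^ m * (x * y)|
      = gegenbauerCoeff μ m * |v| ^ m * (|x| * |y|) := by
        rw [abs_mul, abs_mul, abs_mul, abs_pow, abs_of_pos hcoeff]
    _ ≤ gegenbauerCoeff μ m * |v| ^ m *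
          (A * invGamma (m + μ + 1) * (B * invGamma (m + μ + 1))) := by gcongr
    _ = gegenbauerCoeff μ m * invGamma (m + μ + 1) * |v| ^ m *
          (A * B * invGamma (m + μ + 1)) := by ring
    _ ≤ 2 ^ m / m.factorial * |v| ^ m * (A * B * invGamma (μ + 1)) := by
        gcongr
        · exact gegenbauerCoeff_mul_invGamma_le hμ m
        · exact invGamma_natCast_add_add_one_le hμ.le m
    _ = |2 * v| ^ m / m.factorial * (A * B * invGamma (μ + 1)) := by
        rw [abs_mul, mul_pow, abs_two]; ring

lemma gegenbauerCoeff_mul_poch_div {μ : ℝ} (hμ : ∀ n : ℕ, μ ≠ -n) (hμ' : ∀ n : ℕ, μ + 1 / 2 ≠ -n)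
    (j m : ℕ) :
    gegenbauerCoeff μ (j + m) * (poch (-(j + m : ℕ)) j * poch ((j + m : ℕ) + 2 * μ) j /
        (poch (μ + 1 / 2) j * j.factorial)) =
      (-4) ^ j / j.factorial * gegenbauerCoeff (j + μ) m := by
  have hneg : poch (-(j + m : ℕ)) j = (-1) ^ j * ((j + m).factorial / m.factorial) := by
    rw [add_comm j m, ← poch_neg_natCast_add]; push_cast; rfl
  -- Factor `(2μ)_{2j+m}` in two ways and apply the duplication formula to `(2μ)_{2j}`.
  have hpoch : poch (2 * μ) (j + m) * poch ((j + m : ℕ) + 2 * μ) j / poch (μ + 1 / 2) j =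
      4 ^ j * poch μ j * poch (2 * (j + μ)) m := by
    rw [add_comm _ (2 * μ), ← poch_add, show j + m + j = 2 * j + m by ring, poch_add,
      poch_two_mul, div_eq_iff (poch_ne_zero hμ' j),
      show 2 * μ + (2 * j : ℕ) = 2 * (j + μ) by push_cast; ring]
    ring
  calc
    _ = Gamma μ * ((j + m : ℕ) + μ) * (-1) ^ j *
          (poch (2 * μ) (j + m) * poch ((j + m : ℕ) + 2 * μ) j / poch (μ + 1 / 2) j) /
          (m.factorial * j.factorial) := by rw [gegenbauerCoeff, hneg]; field_simp
    _ = (-4) ^ j / j.factorial * gegenbauerCoeff (j + μ) m := by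
      rw [hpoch, gegenbauerCoeff, Gamma_natCast_add hμ, neg_pow 4]
      push_cast
      ring

/-- The Taylor expansion of the Gegenbauer polynomials at `x = 1`: differentiation raises `μ` by one
and lowers the degree by one. -/
lemma gegenbauerCoeff_mul_gegenbauerN {μ : ℝ} (hμ : ∀ n : ℕ, μ ≠ -n)
    (hμ' : ∀ n : ℕ, μ + 1 / 2 ≠ -n) (n : ℕ) (x : ℝ) :
    gegenbauerCoeff μ n * gegenbauerN μ n x =
      ∑ z ∈ antidiagonal n,
        (2 * (x - 1)) ^ z.1 / z.1.factorial * gegenbauerCoeff (z.1 + μ) z.2 := by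
  rw [gegenbauerN, ← Nat.sum_antidiagonal_eq_sum_range_succ_mk
    (fun z => poch (-(n : ℝ)) z.1 * poch (n + 2 * μ) z.1 /
      (poch (μ + 1 / 2) z.1 * z.1.factorial) * ((1 - x) / 2) ^ z.1), mul_sum]
  refine sum_congr rfl fun ⟨j, m⟩ hjm => ?_
  obtain rfl := mem_antidiagonal.mp hjm
  have hpow : (2 * (x - 1)) ^ j = (-4) ^ j * ((1 - x) / 2) ^ j := by rw [← mul_pow]; ring
  rw [← mul_assoc, gegenbauerCoeff_mul_poch_div hμ hμ', hpow]
  ring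

/-! ### The Bessel–Clifford function -/

/-- The `k`-th term `z ^ k / (k! Γ(k + α + 1))` of the Bessel–Clifford series. -/
noncomputable def besselCliffordTerm (α z : ℝ) (k : ℕ) : ℝ :=
  z ^ k / k.factorial * invGamma (k + α + 1)

/-- The Bessel–Clifford function `C_α(z) = ∑ z ^ k / (k! Γ(k + α + 1))`, which turns `besselJR`
into an entire function of `x ^ 2`. -/
noncomputable def besselClifford (α z : ℝ) : ℝ := ∑' k : ℕ, besselCliffordTerm α z k

lemma besselJR_eq_besselClifford (α x : ℝ) :
    besselJR α x = Gamma (α + 1) * besselClifford α (-1 * (x / 2) ^ 2) := by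
  unfold besselJR besselClifford
  congr 1
  refine tsum_congr fun k => ?_
  rw [besselCliffordTerm, invGamma, mul_pow, ← pow_mul]
  ring

lemma abs_besselCliffordTerm_le {α : ℝ} (hα : 0 ≤ α) (z : ℝ) (k : ℕ) :
    |besselCliffordTerm α z k| ≤ |z| ^ k / k.factorial * invGamma (α + 1) := by
  have hpos : 0 < invGamma (k + α + 1) := invGamma_pos (by positivity)
  rw [besselCliffordTerm, abs_mul, abs_div, abs_pow, Nat.abs_cast, abs_of_pos hpos]
  gcongr
  exact invGamma_natCast_add_add_one_le hα k

lemma summable_norm_besselCliffordTerm {α : ℝ} (hα : 0 ≤ α) (z : ℝ) :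
    Summable fun k => ‖besselCliffordTerm α z k‖ :=
  .of_nonneg_of_le (fun _ => norm_nonneg _) (abs_besselCliffordTerm_le hα z)
    ((summable_pow_div_factorial _).mul_right _)

lemma hasSum_besselClifford {α : ℝ} (hα : 0 ≤ α) (z : ℝ) :
    HasSum (besselCliffordTerm α z) (besselClifford α z) :=
  (summable_norm_besselCliffordTerm hα z).of_norm.hasSum

lemma abs_besselClifford_le {α : ℝ} (hα : 0 ≤ α) (z : ℝ) :
    |besselClifford α z| ≤ exp |z| * invGamma (α + 1) := by
  have hexp := NormedSpace.expSeries_div_hasSum_exp |z|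
  rw [← exp_eq_exp_ℝ] at hexp
  exact tsum_of_norm_bounded (f := besselCliffordTerm α z) (hexp.mul_right _)
    (abs_besselCliffordTerm_le hα z)

lemma hasSum_sum_antidiagonal {A E : Type*} [AddCommMonoid A] [HasAntidiagonal A]
    [AddCommMonoid E] [TopologicalSpace E] [ContinuousAdd E] [RegularSpace E]
    {f : A × A → E} {a : E} (h : HasSum f a) :
    HasSum (fun n => ∑ z ∈ antidiagonal n, f z) a := by
  refine (HasAntidiagonal.sigmaAntidiagonalEquivProd.hasSum_iff.mpr h).sigma fun n => ?_
  rw [← sum_coe_sort]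
  exact hasSum_fintype _

lemma add_pow_div_factorial {K : Type*} [Field K] [CharZero K] (x y : K) (n : ℕ) :
    (x + y) ^ n / n.factorial =
      ∑ z ∈ antidiagonal n, x ^ z.1 / z.1.factorial * (y ^ z.2 / z.2.factorial) := by
  rw [(Commute.all x y).add_pow', sum_div]
  refine sum_congr rfl fun ⟨j, l⟩ hjl => ?_
  obtain rfl := mem_antidiagonal.mp hjl
  have hfactorial : ((j + l).factorial : K) ≠ 0 := Nat.cast_ne_zero.mpr (Nat.factorial_ne_zero _)
  rw [nsmul_eq_mul, Nat.cast_add_choose]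
  field_simp

lemma hasSum_besselClifford_add {μ : ℝ} (hμ : 0 ≤ μ) (h w : ℝ) :
    HasSum (fun j : ℕ => h ^ j / j.factorial * besselClifford (j + μ) w)
      (besselClifford μ (h + w)) := by
  let f : ℕ × ℕ → ℝ := fun z => h ^ z.1 / z.1.factorial * besselCliffordTerm (z.1 + μ) w z.2
  have hbound : ∀ z, ‖f z‖ ≤
      |h| ^ z.1 / z.1.factorial * (|w| ^ z.2 / z.2.factorial * invGamma (μ + 1)) := by
    rintro ⟨j, l⟩
    rw [norm_mul, norm_div, norm_pow, norm_eq_abs, RCLike.norm_natCast, norm_eq_abs]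
    gcongr
    refine (abs_besselCliffordTerm_le (by positivity) w l).trans ?_
    gcongr
    exact invGamma_natCast_add_add_one_le hμ j
  have hsummable : Summable f := by
    refine .of_norm_bounded (summable_mul_of_summable_norm
      (f := fun j : ℕ => |h| ^ j / j.factorial)
      (g := fun l : ℕ => |w| ^ l / l.factorial * invGamma (μ + 1)) ?_ ?_) hbound
    · exact (summable_pow_div_factorial _).norm
    · exact ((summable_pow_div_factorial _).mul_right _).norm
  have hdiag : (fun n => ∑ z ∈ antidiagonal n, f z) = besselCliffordTerm μ (h + w) := by
    funext n
    rw [besselCliffordTerm, add_pow_div_factorial, sum_mul]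
    refine sum_congr rfl fun ⟨j, l⟩ hjl => ?_
    obtain rfl := mem_antidiagonal.mp hjl
    simp only [f, besselCliffordTerm]
    rw [← mul_assoc, show (l : ℝ) + (j + μ) + 1 = (j + l : ℕ) + μ + 1 by push_cast; ring]
  have hsum := hsummable.hasSum
  have hlimit := hasSum_sum_antidiagonal hsum
  rw [hdiag] at hlimit
  rw [hlimit.unique (hasSum_besselClifford hμ _)] at hsum
  exact hsum.prod_fiberwise fun j => (hasSum_besselClifford (by positivity) w).mul_left _

/-! ### The case `x = 1` -/

/-- Summand of the terminating very-well-poised series that is the coefficient of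
`a ^ (2 * P + e) * b ^ (2 * Q + e)` in the addition theorem at `x = 1`. The reciprocal Gamma
functions stand for `1 / (P - r)!` and `1 / (Q - r)!`, so that it vanishes for `r > P` and for
`r > Q`. -/
noncomputable def wzTerm (μ : ℝ) (P Q e r : ℕ) : ℝ :=
  gegenbauerCoeff μ (2 * r + e) * invGamma (P - r + 1) * invGamma (Q - r + 1) *
    invGamma (P + r + e + μ + 1) * invGamma (Q + r + e + μ + 1)

/-- Wilf–Zeilberger companion of `wzTerm`, whose difference in `r` witnesses the recurrence of
`∑ r, wzTerm μ P Q e r` in `P`; see `wzTerm_recurrence`. -/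
noncomputable def wzCompanion (μ : ℝ) (P Q e r : ℕ) : ℝ :=
  -(Gamma μ * (2 * r + e) * (2 * r + e - 1) * (poch (2 * μ) (2 * r + e) / (2 * r + e).factorial) *
    invGamma (P - r + 2) * invGamma (Q - r + 1) * invGamma (P + r + e + μ + 1) *
    invGamma (Q + r + e + μ))

/-- Closed form of `∑ r, wzTerm μ P Q e r`. -/
noncomputable def wzSum (μ : ℝ) (P Q e : ℕ) : ℝ :=
  (2 * (P + Q + e)).choose (2 * P + e) / (P + Q + e).factorial * invGamma (P + Q + e + μ + 1)

lemma wzTerm_recurrence (μ : ℝ) (P Q e r : ℕ) :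
    (2 * P + e + 1 : ℝ) * (2 * P + e + 2) * (P + Q + e + μ + 1) * wzTerm μ (P + 1) Q e r -
        2 * (2 * (P + Q + e) + 1) * wzTerm μ P Q e r =
      wzCompanion μ P Q e (r + 1) - wzCompanion μ P Q e r := by
  have hP := invGamma_eq_mul_invGamma_add_one (P - r + 1)
  have hQ := invGamma_eq_mul_invGamma_add_one (Q - r)
  have hPμ := invGamma_eq_mul_invGamma_add_one (P + r + e + μ + 1)
  have hQμ := invGamma_eq_mul_invGamma_add_one (Q + r + e + μ)
  unfold wzTerm wzCompanion gegenbauerCoeff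
  rw [show 2 * (r + 1) + e = 2 * r + e + 1 + 1 by ring]
  simp only [poch_succ, Nat.factorial_succ]
  push_cast
  rw [show (P : ℝ) + 1 - r + 1 = P - r + 1 + 1 by ring,
    show (P : ℝ) + 1 + r + e + μ + 1 = P + r + e + μ + 1 + 1 by ring,
    show (P : ℝ) - (r + 1) + 2 = P - r + 1 by ring, show (P : ℝ) - r + 2 = P - r + 1 + 1 by ring,
    show (Q : ℝ) - (r + 1) + 1 = Q - r by ring,
    show (P : ℝ) + (r + 1) + e + μ + 1 = P + r + e + μ + 1 + 1 by ring,
    show (Q : ℝ) + (r + 1) + e + μ = Q + r + e + μ + 1 by ring, hP, hQ, hPμ, hQμ]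
  field_simp
  ring

lemma wzSum_succ (μ : ℝ) (P Q e : ℕ) :
    (2 * P + e + 1 : ℝ) * (2 * P + e + 2) * (P + Q + e + μ + 1) * wzSum μ (P + 1) Q e =
      2 * (2 * (P + Q + e) + 1) * wzSum μ P Q e := by
  have hchoose : ((2 * (P + Q + e) + 1 + 1).choose (2 * P + e + 1 + 1) : ℝ) *
      (2 * P + e + 1) * (2 * P + e + 2) =
        (2 * (P + Q + e) + 2) * (2 * (P + Q + e) + 1) *
          (2 * (P + Q + e)).choose (2 * P + e) := by
    have hfst := Nat.add_one_mul_choose_eq (2 * (P + Q + e)) (2 * P + e)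
    have hsnd := Nat.add_one_mul_choose_eq (2 * (P + Q + e) + 1) (2 * P + e + 1)
    apply_fun ((↑) : ℕ → ℝ) at hfst hsnd
    push_cast at hfst hsnd
    linear_combination -(2 * P + e + 1 : ℝ) * hsnd - (2 * (P + Q + e) + 2 : ℝ) * hfst
  have hdiv : ((2 * (P + Q + e) + 1 + 1).choose (2 * P + e + 1 + 1) / (P + Q + e + 1).factorial :
      ℝ) * (2 * P + e + 1) * (2 * P + e + 2) =
        2 * (2 * (P + Q + e) + 1) *
          ((2 * (P + Q + e)).choose (2 * P + e) / (P + Q + e).factorial) := by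
    rw [Nat.factorial_succ]
    push_cast
    field_simp
    linear_combination hchoose
  rw [wzSum, wzSum, show 2 * (P + 1 + Q + e) = 2 * (P + Q + e) + 1 + 1 by ring,
    show 2 * (P + 1) + e = 2 * P + e + 1 + 1 by ring, show P + 1 + Q + e = P + Q + e + 1 by ring,
    invGamma_eq_mul_invGamma_add_one (P + Q + e + μ + 1),
    show ((P + 1 : ℕ) : ℝ) + Q + e + μ + 1 = P + Q + e + μ + 1 + 1 by push_cast; ring]
  linear_combination (P + Q + e + μ + 1) * invGamma (P + Q + e + μ + 1 + 1) * hdiv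

lemma invGamma_natCast_sub_add_one_of_lt {P r : ℕ} (h : P < r) :
    invGamma (P - r + 1) = 0 := by
  obtain ⟨d, rfl⟩ := Nat.exists_eq_add_of_lt h
  rw [← invGamma_neg_natCast d]
  push_cast
  ring_nf

lemma wzTerm_eq_zero_of_lt_left (μ : ℝ) {P r : ℕ} (h : P < r) (Q e : ℕ) :
    wzTerm μ P Q e r = 0 := by
  simp [wzTerm, invGamma_natCast_sub_add_one_of_lt h]

lemma wzTerm_eq_zero_of_lt_right (μ : ℝ) {Q r : ℕ} (h : Q < r) (P e : ℕ) :
    wzTerm μ P Q e r = 0 := by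
  simp [wzTerm, invGamma_natCast_sub_add_one_of_lt h]

lemma wzCompanion_zero (μ : ℝ) (P Q : ℕ) {e : ℕ} (he : e < 2) : wzCompanion μ P Q e 0 = 0 := by
  interval_cases e <;> simp [wzCompanion]

lemma wzCompanion_add_two (μ : ℝ) (P Q e : ℕ) : wzCompanion μ P Q e (P + 2) = 0 := by
  have hzero : (P : ℝ) - (P + 2 : ℕ) + 2 = -(0 : ℕ) := by push_cast; ring
  rw [wzCompanion, hzero, invGamma_neg_natCast]
  ring

lemma wzTerm_zero_zero {μ : ℝ} (hμ : ∀ n : ℕ, μ ≠ -n) (Q : ℕ) {e : ℕ} (he : e < 2) :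
    wzTerm μ 0 Q e 0 = wzSum μ 0 Q e := by
  have hcoeff : gegenbauerCoeff μ e * invGamma (e + μ + 1) = e + 1 := by
    have hμ₀ : μ ≠ 0 := by simpa using hμ 0
    rw [gegenbauerCoeff_mul_invGamma hμ]
    interval_cases e
    · simp
    · simp [poch_succ, mul_div_cancel_right₀ _ hμ₀, one_add_one_eq_two]
  have hchoose : ((2 * (Q + e)).choose e / (Q + e).factorial : ℝ) = (e + 1) * invGamma (Q + 1) := by
    rw [invGamma_natCast_add_one]
    interval_cases e
    · simp
    · rw [Nat.choose_one_right, Nat.factorial_succ]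
      push_cast
      field_simp
      ring
  have hone : invGamma 1 = 1 := by simp [invGamma]
  rw [wzSum, Nat.zero_add, Nat.mul_zero, Nat.zero_add, hchoose, ← hcoeff]
  simp only [wzTerm, Nat.cast_zero, sub_zero, zero_add, add_zero, mul_zero, hone]
  ring

lemma sum_wzTerm {μ : ℝ} (hμ : ∀ n : ℕ, μ ≠ -n) (P Q : ℕ) {e : ℕ} (he : e < 2) :
    ∑ r ∈ range (P + 1), wzTerm μ P Q e r = wzSum μ P Q e := by
  induction P with
  | zero => simpa using wzTerm_zero_zero hμ Q he
  | succ P ih =>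
    have hne : (2 * P + e + 1 : ℝ) * (2 * P + e + 2) * (P + Q + e + μ + 1) ≠ 0 := by
      refine mul_ne_zero (by positivity) fun h => hμ (P + Q + e + 1) ?_
      push_cast
      linarith
    have htelescope := sum_range_sub (wzCompanion μ P Q e) (P + 2)
    simp_rw [← wzTerm_recurrence] at htelescope
    rw [wzCompanion_zero μ P Q he, wzCompanion_add_two, sum_sub_distrib, ← mul_sum, ← mul_sum,
      sum_range_succ (wzTerm μ P Q e), wzTerm_eq_zero_of_lt_left μ P.lt_succ_self, ih] at htelescope
    apply mul_left_cancel₀ hne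
    rw [wzSum_succ]
    linarith

/-- Term of the triple series obtained from the addition theorem at `x = 1` by expanding both
Bessel–Clifford functions. The free parameter `c`, which is `-1` for Bessel functions, keeps signs
out of the computation. -/
noncomputable def diagTerm (μ c a b : ℝ) (z : ℕ × ℕ × ℕ) : ℝ :=
  gegenbauerCoeff μ z.1 * (c * a * b) ^ z.1 *
    (besselCliffordTerm (z.1 + μ) (c * a ^ 2) z.2.1 *
      besselCliffordTerm (z.1 + μ) (c * b ^ 2) z.2.2)

lemma summable_diagTerm {μ : ℝ} (hμ : 0 < μ) (c a b : ℝ) : Summable (diagTerm μ c a b) := by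
  have hexp (x : ℝ) : Summable fun n : ℕ => ‖|x| ^ n / (n.factorial : ℝ)‖ :=
    (summable_pow_div_factorial _).norm
  have hprod := (summable_mul_of_summable_norm (hexp (2 * (c * a * b)))
    (hexp (c * a ^ 2) |>.mul_norm (hexp (c * b ^ 2)))).mul_right (invGamma (μ + 1))
  refine .of_norm_bounded hprod fun ⟨m, p, q⟩ => ?_
  have hα : 0 ≤ (m : ℝ) + μ := by positivity
  rw [norm_eq_abs, mul_assoc]
  exact abs_gegenbauerCoeff_mul_le hμ m (c * a * b)
    (abs_besselCliffordTerm_le hα (c * a ^ 2) p) (abs_besselCliffordTerm_le hα (c * b ^ 2) q)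

lemma diagTerm_eq_mul_wzTerm (μ c a b : ℝ) (e : ℕ) {P Q r : ℕ} (hP : r ≤ P) (hQ : r ≤ Q) :
    diagTerm μ c a b (2 * r + e, P - r, Q - r) =
      c ^ (P + Q + e) * a ^ (2 * P + e) * b ^ (2 * Q + e) * wzTerm μ P Q e r := by
  obtain ⟨p, rfl⟩ := Nat.exists_eq_add_of_le hP
  obtain ⟨q, rfl⟩ := Nat.exists_eq_add_of_le hQ
  simp only [diagTerm, wzTerm, besselCliffordTerm, Nat.add_sub_cancel_left, div_eq_mul_inv,
    ← invGamma_natCast_add_one]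
  push_cast
  ring_nf

/-- The pair `(k, i)` such that `diagTerm μ c a b (m, p, q)` is a multiple of the monomial
`c ^ k * a ^ i * b ^ (2 * k - i)`. -/
def monomialIndex (z : ℕ × ℕ × ℕ) : ℕ × ℕ := (z.1 + z.2.1 + z.2.2, z.1 + 2 * z.2.1)

lemma preimage_monomialIndex_eq_empty {k i : ℕ} (h : 2 * k < i) :
    monomialIndex ⁻¹' {(k, i)} = ∅ := by
  refine Set.eq_empty_of_forall_notMem fun ⟨m, p, q⟩ hmpq => ?_
  simp only [monomialIndex, Set.mem_preimage, Set.mem_singleton_iff, Prod.mk.injEq] at hmpq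
  omega

lemma preimage_monomialIndex (P Q : ℕ) {e : ℕ} (he : e < 2) :
    monomialIndex ⁻¹' {(P + Q + e, 2 * P + e)} =
      ((range (min P Q + 1)).image fun r => (2 * r + e, P - r, Q - r) : Finset (ℕ × ℕ × ℕ)) := by
  ext ⟨m, p, q⟩
  simp only [monomialIndex, Set.mem_preimage, Set.mem_singleton_iff, Prod.mk.injEq, mem_coe,
    mem_image, mem_range]
  constructor
  · rintro ⟨hk, hi⟩
    exact ⟨P - p, by omega, by omega, by omega, by omega⟩
  · rintro ⟨r, hr, hm, hp, hq⟩
    omega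

lemma tsum_preimage_diagTerm {μ : ℝ} (hμ : ∀ n : ℕ, μ ≠ -n) (c a b : ℝ) (P Q : ℕ) {e : ℕ}
    (he : e < 2) :
    ∑' z : monomialIndex ⁻¹' {(P + Q + e, 2 * P + e)}, diagTerm μ c a b z =
      c ^ (P + Q + e) * a ^ (2 * P + e) * b ^ (2 * Q + e) * wzSum μ P Q e := by
  have hinj : Set.InjOn (fun r => (2 * r + e, P - r, Q - r)) (range (min P Q + 1)) := by
    intro r _ r' _ hrr'
    simp only [Prod.mk.injEq] at hrr'
    omega
  have hextend : ∑ r ∈ range (min P Q + 1), wzTerm μ P Q e r =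
      ∑ r ∈ range (P + 1), wzTerm μ P Q e r := by
    refine sum_subset (range_mono (by omega)) fun r hr hr' => wzTerm_eq_zero_of_lt_right μ ?_ P e
    simp only [mem_range] at hr hr'
    omega
  rw [preimage_monomialIndex P Q he, tsum_subtype', sum_image hinj, ← sum_wzTerm hμ P Q he,
    ← hextend, mul_sum]
  refine sum_congr rfl fun r hr => ?_
  have := mem_range.mp hr
  exact diagTerm_eq_mul_wzTerm μ c a b e (by omega) (by omega)

lemma tsum_preimage_diagTerm_eq_choose {μ : ℝ} (hμ : ∀ n : ℕ, μ ≠ -n) (c a b : ℝ) (k i : ℕ) :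
    ∑' z : monomialIndex ⁻¹' {(k, i)}, diagTerm μ c a b z =
      c ^ k / k.factorial * invGamma (k + μ + 1) *
        (a ^ i * b ^ (2 * k - i) * (2 * k).choose i) := by
  rcases lt_or_ge (2 * k) i with hi | hi
  · rw [preimage_monomialIndex_eq_empty hi, tsum_empty, Nat.choose_eq_zero_of_lt hi]
    simp
  · obtain ⟨P, Q, e, he, rfl, rfl⟩ : ∃ P Q e : ℕ, e < 2 ∧ i = 2 * P + e ∧ k = P + Q + e :=
      ⟨i / 2, k - i / 2 - i % 2, i % 2, by omega, by omega, by omega⟩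
    rw [tsum_preimage_diagTerm hμ c a b P Q he, wzSum,
      show 2 * (P + Q + e) - (2 * P + e) = 2 * Q + e by omega]
    push_cast
    ring

lemma hasSum_diagTerm {μ : ℝ} (hμ : 0 < μ) (c a b : ℝ) :
    HasSum (diagTerm μ c a b) (besselClifford μ (c * (a + b) ^ 2)) := by
  have hsum := (summable_diagTerm hμ c a b).hasSum
  have hfibers := hsum.tsum_fiberwise monomialIndex
  simp_rw [funext fun y : ℕ × ℕ =>
    tsum_preimage_diagTerm_eq_choose (ne_neg_natCast_of_pos hμ) c a b y.1 y.2] at hfibers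
  have hlimit : HasSum (besselCliffordTerm μ (c * (a + b) ^ 2)) (∑' z, diagTerm μ c a b z) := by
    refine hfibers.prod_fiberwise fun k => ?_
    have hpow : besselCliffordTerm μ (c * (a + b) ^ 2) k =
        ∑ i ∈ range (2 * k + 1), c ^ k / k.factorial * invGamma (k + μ + 1) *
          (a ^ i * b ^ (2 * k - i) * (2 * k).choose i) := by
      rw [← mul_sum, ← add_pow, besselCliffordTerm, mul_pow, ← pow_mul]
      ring
    rw [hpow]
    refine hasSum_sum_of_ne_finset_zero fun i hi => ?_
    rw [Nat.choose_eq_zero_of_lt (by simpa using hi)]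
    simp
  rwa [hlimit.unique (hasSum_besselClifford hμ.le _)] at hsum

lemma hasSum_besselClifford_mul_add_sq {μ : ℝ} (hμ : 0 < μ) (c a b : ℝ) :
    HasSum (fun m : ℕ => gegenbauerCoeff μ m * (c * a * b) ^ m *
        (besselClifford (m + μ) (c * a ^ 2) * besselClifford (m + μ) (c * b ^ 2)))
      (besselClifford μ (c * (a + b) ^ 2)) := by
  have hprod (m : ℕ) : Summable fun z : ℕ × ℕ =>
      besselCliffordTerm (m + μ) (c * a ^ 2) z.1 * besselCliffordTerm (m + μ) (c * b ^ 2) z.2 :=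
    summable_mul_of_summable_norm (summable_norm_besselCliffordTerm (by positivity) _)
      (summable_norm_besselCliffordTerm (by positivity) _)
  exact (hasSum_diagTerm hμ c a b).prod_fiberwise fun m =>
    ((hasSum_besselClifford (by positivity) _).mul (hasSum_besselClifford (by positivity) _)
      (hprod m)).mul_left _

/-! ### The addition theorem -/

/-- Term of the double series obtained from the case `x = 1` at the parameters `j + μ` by a Taylor
expansion with increment `h`. -/
noncomputable def additionTerm (μ c a b h : ℝ) (z : ℕ × ℕ) : ℝ :=
  h ^ z.1 / z.1.factorial * (gegenbauerCoeff (z.1 + μ) z.2 * (c * a * b) ^ z.2 *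
    (besselClifford (z.2 + (z.1 + μ)) (c * a ^ 2) * besselClifford (z.2 + (z.1 + μ)) (c * b ^ 2)))

/-- Uniform bound for `additionTerm μ c a b h` over `|h| ≤ H`. -/
noncomputable def additionBound (μ c a b H : ℝ) (z : ℕ × ℕ) : ℝ :=
  H ^ z.1 / z.1.factorial * (|2 * (c * a * b)| ^ z.2 / z.2.factorial *
    (exp |c * a ^ 2| * exp |c * b ^ 2| * invGamma (μ + 1)))

lemma summable_additionBound (μ c a b H : ℝ) : Summable (additionBound μ c a b H) :=
  summable_mul_of_summable_norm (f := fun j : ℕ => H ^ j / j.factorial)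
    (g := fun m : ℕ => |2 * (c * a * b)| ^ m / m.factorial *
      (exp |c * a ^ 2| * exp |c * b ^ 2| * invGamma (μ + 1)))
    (summable_pow_div_factorial _).norm ((summable_pow_div_factorial _).mul_right _).norm

lemma abs_additionTerm_le {μ : ℝ} (hμ : 0 < μ) (c a b : ℝ) {h H : ℝ} (hH : |h| ≤ H) (z : ℕ × ℕ) :
    |additionTerm μ c a b h z| ≤ additionBound μ c a b H z := by
  obtain ⟨j, m⟩ := z
  have hα : 0 ≤ (m : ℝ) + (j + μ) := by positivity
  have hterm := abs_gegenbauerCoeff_mul_le (μ := j + μ) (by positivity) m (c * a * b)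
    (abs_besselClifford_le hα (c * a ^ 2)) (abs_besselClifford_le hα (c * b ^ 2))
  have hH₀ : 0 ≤ H := (abs_nonneg h).trans hH
  rw [additionTerm, additionBound, abs_mul, abs_div, abs_pow, Nat.abs_cast]
  gcongr
  refine hterm.trans ?_
  gcongr
  exact invGamma_natCast_add_add_one_le hμ.le j

lemma hasSum_additionTerm {μ : ℝ} (hμ : 0 < μ) (c a b h : ℝ) :
    HasSum (additionTerm μ c a b h) (besselClifford μ (h + c * (a + b) ^ 2)) := by
  have hsum := (Summable.of_norm_bounded (f := additionTerm μ c a b h)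
    (summable_additionBound μ c a b |h|) (abs_additionTerm_le hμ c a b le_rfl)).hasSum
  have hrow (j : ℕ) : HasSum (fun m => additionTerm μ c a b h (j, m))
      (h ^ j / j.factorial * besselClifford (j + μ) (c * (a + b) ^ 2)) :=
    (hasSum_besselClifford_mul_add_sq (by positivity) c a b).mul_left _
  rwa [(hsum.prod_fiberwise hrow).unique (hasSum_besselClifford_add hμ.le h _)] at hsum

/-- The `n`-th term of Gegenbauer's addition theorem for the Bessel–Clifford function. -/
noncomputable def gegenbauerTerm (μ c a b x : ℝ) (n : ℕ) : ℝ :=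
  gegenbauerCoeff μ n * gegenbauerN μ n x *
    ((c * a * b) ^ n * (besselClifford (n + μ) (c * a ^ 2) * besselClifford (n + μ) (c * b ^ 2)))

lemma sum_antidiagonal_additionTerm {μ : ℝ} (hμ : ∀ n : ℕ, μ ≠ -n)
    (hμ' : ∀ n : ℕ, μ + 1 / 2 ≠ -n) (c a b x : ℝ) (n : ℕ) :
    ∑ z ∈ antidiagonal n, additionTerm μ c a b (2 * (x - 1) * (c * a * b)) z =
      gegenbauerTerm μ c a b x n := by
  rw [gegenbauerTerm, gegenbauerCoeff_mul_gegenbauerN hμ hμ', sum_mul]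
  refine sum_congr rfl fun ⟨j, m⟩ hjm => ?_
  obtain rfl := mem_antidiagonal.mp hjm
  rw [additionTerm, mul_pow, show (m : ℝ) + (j + μ) = (j + m : ℕ) + μ by push_cast; ring]
  ring

lemma hasSum_gegenbauerTerm {μ : ℝ} (hμ : 0 < μ) (c a b x : ℝ) :
    HasSum (gegenbauerTerm μ c a b x) (besselClifford μ (c * (a ^ 2 + b ^ 2 + 2 * a * b * x))) := by
  have hsum := hasSum_sum_antidiagonal
    (hasSum_additionTerm hμ c a b (2 * (x - 1) * (c * a * b)))
  simp_rw [sum_antidiagonal_additionTerm (ne_neg_natCast_of_pos hμ)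
    (ne_neg_natCast_of_pos (add_pos hμ one_half_pos))] at hsum
  convert hsum using 2
  ring

lemma abs_gegenbauerTerm_le {μ : ℝ} (hμ : 0 < μ) (c a b : ℝ) {x R : ℝ} (hx : |x - 1| ≤ R) (n : ℕ) :
    |gegenbauerTerm μ c a b x n| ≤
      ∑ z ∈ antidiagonal n, additionBound μ c a b (2 * R * |c * a * b|) z := by
  rw [← sum_antidiagonal_additionTerm (ne_neg_natCast_of_pos hμ)
    (ne_neg_natCast_of_pos (add_pos hμ one_half_pos))]
  refine (abs_sum_le_sum_abs _ _).trans (sum_le_sum fun z _ => abs_additionTerm_le hμ c a b ?_ z)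
  rw [abs_mul, abs_mul, abs_two]
  gcongr

lemma tendstoUniformlyOn_sum_gegenbauerTerm {μ : ℝ} (hμ : 0 < μ) (c a b R : ℝ) :
    TendstoUniformlyOn (fun m x => ∑ n ∈ range m, gegenbauerTerm μ c a b x n)
      (fun x => besselClifford μ (c * (a ^ 2 + b ^ 2 + 2 * a * b * x))) atTop
      (Metric.closedBall 1 R) := by
  have hbound := hasSum_sum_antidiagonal
    (summable_additionBound μ c a b (2 * R * |c * a * b|)).hasSum
  simp_rw [← fun x => (hasSum_gegenbauerTerm hμ c a b x).tsum_eq]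
  exact tendstoUniformlyOn_tsum_nat hbound.summable fun n _ hx =>
    abs_gegenbauerTerm_le hμ c a b hx n

lemma gegenbauer_addition_term_eq {lam : ℝ} (hlam : ∀ n : ℕ, lam ≠ -n) (s t x : ℝ) (n : ℕ) :
    ((n : ℝ) + lam) * poch (2 * lam) n / (lam * n.factorial) *
        (Gamma (lam + 1) / (2 ^ n * Gamma (n + lam + 1))) ^ 2 * (s * t) ^ n *
        besselJR (n + lam) s * besselJR (n + lam) t * gegenbauerN lam n x =
      Gamma (lam + 1) * gegenbauerTerm lam (-1) (s / 2) (-(t / 2)) x n := by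
  have hGamma : Gamma ((n : ℝ) + lam + 1) ≠ 0 :=
    Gamma_ne_zero fun k h => hlam (n + 1 + k) (by push_cast; linarith)
  have hlam₀ : lam ≠ 0 := by simpa using hlam 0
  have hpow : (-1 * (s / 2) * -(t / 2)) ^ n = (s * t) ^ n / (2 ^ n) ^ 2 := by
    rw [← pow_mul, mul_comm n, pow_mul, ← div_pow]; ring
  rw [gegenbauerTerm, gegenbauerCoeff, besselJR_eq_besselClifford, besselJR_eq_besselClifford,
    neg_sq, hpow, Gamma_add_one hlam₀]
  field_simp

lemma besselJR_sqrt_eq_besselClifford (lam s t θ : ℝ) :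
    besselJR lam (√(s ^ 2 + t ^ 2 - 2 * s * t * cos θ)) =
      Gamma (lam + 1) * besselClifford lam
        (-1 * ((s / 2) ^ 2 + (-(t / 2)) ^ 2 + 2 * (s / 2) * -(t / 2) * cos θ)) := by
  have hnonneg : 0 ≤ s ^ 2 + t ^ 2 - 2 * s * t * cos θ := by
    nlinarith [sq_nonneg (s * cos θ - t), sq_nonneg (s * sin θ), sin_sq_add_cos_sq θ]
  rw [besselJR_eq_besselClifford, div_pow, sq_sqrt hnonneg]
  ring_nf

/-- degenerate addition theorem for Gegenbauer polynomials: for `λ > 0`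
and all `s, t, θ ∈ ℝ`,
`j_λ(√(s² + t² − 2st cos θ)) = Σ_{n≥0} ((n+λ)(2λ)_n/(λ n!)) (Γ(λ+1)/(2^n Γ(n+λ+1)))²
(st)^n j_{n+λ}(s) j_{n+λ}(t) C̃_n^λ(cos θ)`, with uniform convergence in `θ`. -/
theorem gegenbauer_addition_theorem (lam : ℝ) (hlam : 0 < lam) (s t : ℝ) :
    TendstoUniformly
      (fun (m : ℕ) (θ : ℝ) =>
        ∑ n ∈ Finset.range m,
          ((n : ℝ) + lam) * poch (2 * lam) n / (lam * (n.factorial : ℝ)) *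
            (Real.Gamma (lam + 1) / (2 ^ n * Real.Gamma ((n : ℝ) + lam + 1))) ^ 2 *
            (s * t) ^ n * besselJR ((n : ℝ) + lam) s * besselJR ((n : ℝ) + lam) t *
            gegenbauerN lam n (Real.cos θ))
      (fun θ : ℝ => besselJR lam (Real.sqrt (s ^ 2 + t ^ 2 - 2 * s * t * Real.cos θ)))
      atTop := by
  have hcos : Real.cos ⁻¹' Metric.closedBall 1 2 = Set.univ := by
    refine Set.eq_univ_of_forall fun θ => ?_
    rw [Set.mem_preimage, Metric.mem_closedBall, dist_eq, abs_le]
    constructor <;> linarith [neg_one_le_cos θ, cos_le_one θ]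
  have hunif := (tendstoUniformlyOn_sum_gegenbauerTerm hlam (-1) (s / 2) (-(t / 2)) 2).comp Real.cos
  rw [hcos, tendstoUniformlyOn_univ] at hunif
  simp_rw [gegenbauer_addition_term_eq (ne_neg_natCast_of_pos hlam),
    besselJR_sqrt_eq_besselClifford, ← mul_sum]
  exact (uniformContinuous_const_smul (Real.Gamma (lam + 1))).comp_tendstoUniformly hunif
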